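/- arXiv:math/0608206 — 6 statements merged into one kernel-verified Lean document; each statement's English description precedes it below -/
import Mathlib

section
/- Let m ≥ 1 and let G be a cyclic group of order m. Then for every s with Re s > 1, Z_P(s) = ∏_{n | m} ζ_{P_n}(ns)^{m/n}, where the product is over the positive divisors n of m; in particular all the infinite products involved converge. -/
/-- Local Euler factor identity. -/
lemma local_factor {G : Type*} [CommGroup G] [Fintype G] [Fintype (G →* ℂˣ)] (g : G) (x : ℂ) :
    ∏ ρ : G →* ℂˣ, (1 - (ρ g : ℂ) * x) = (1 - x ^ orderOf g) ^ (Fintype.card G / orderOf g) := by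
  classical
  have hn : 0 < orderOf g := orderOf_pos g
  have : NeZero (Monoid.exponent G) := ⟨Monoid.exponent_ne_zero_of_finite⟩
  let f : (G →* ℂˣ) →* ℂˣ := MonoidHom.eval g
  have hf : ∀ ρ, f ρ = ρ g := fun ρ => rfl
  let S : Finset ℂˣ := Finset.univ.image f
  have hSr : S.card = Nat.card f.range := by
    rw [← Set.ncard_coe_finset]
    simp [S, MonoidHom.coe_range, Set.ncard_def, ← Nat.card_coe_set_eq]
    rfl
  have hpow : ∀ ρ : G →* ℂˣ, ρ (g ^ S.card) = ρ 1 := by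
    intro ρ
    have h : (⟨f ρ, ρ, rfl⟩ : f.range) ^ Nat.card f.range = 1 := pow_card_eq_one'
    have h2 := congrArg Subtype.val h
    rw [map_pow, map_one, hSr]
    exact h2
  have hdvd : orderOf g ∣ S.card :=
    orderOf_dvd_of_pow_eq_one ((CommGroup.forall_apply_eq_apply_iff G (M := ℂ)).1 hpow)
  have hSpos : 0 < S.card := Finset.card_pos.2 ⟨f 1, Finset.mem_image_of_mem _ (Finset.mem_univ _)⟩
  have hprim := Complex.isPrimitiveRoot_exp (orderOf g) hn.ne'
  have hcardimg : (S.image (Units.val : ℂˣ → ℂ)).card = S.card :=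
    Finset.card_image_of_injective _ Units.val_injective
  have himg : S.image (Units.val : ℂˣ → ℂ) = Polynomial.nthRootsFinset (orderOf g) (1 : ℂ) := by
    apply Finset.eq_of_subset_of_card_le
    · intro z hz
      simp only [S, Finset.mem_image, Finset.mem_univ, true_and] at hz
      obtain ⟨_, ⟨ρ, rfl⟩, rfl⟩ := hz
      rw [Polynomial.mem_nthRootsFinset hn, hf, ← Units.val_pow_eq_pow_val, ← map_pow,
        pow_orderOf_eq_one, map_one, Units.val_one]
    · rw [hprim.card_nthRootsFinset, hcardimg]
      exact Nat.le_of_dvd hSpos hdvd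
  have hScard : S.card = orderOf g := by rw [← hcardimg, himg, hprim.card_nthRootsFinset]
  set k := (Finset.univ.filter fun ρ => f ρ = 1).card with hk
  have hfib : ∀ b ∈ S, (Finset.univ.filter fun ρ => f ρ = b).card = k := by
    intro b hb
    apply MonoidHom.card_fiber_eq_of_mem_range f
    · simpa [S] using hb
    · exact ⟨1, map_one f⟩
  have htot : Fintype.card G = orderOf g * k := by
    have h1 : Fintype.card (G →* ℂˣ) = ∑ b ∈ S, (Finset.univ.filter fun ρ => f ρ = b).card :=
      Finset.card_eq_sum_card_image f Finset.univ
    rw [Finset.sum_congr rfl hfib, Finset.sum_const, hScard, smul_eq_mul] at h1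
    rw [← h1, ← Nat.card_eq_fintype_card, ← Nat.card_eq_fintype_card,
      CommGroup.card_monoidHom_of_hasEnoughRootsOfUnity G ℂ]
  rw [htot, Nat.mul_div_cancel_left _ hn]
  have h2 := hprim.pow_sub_pow_eq_prod_sub_mul 1 x hn
  rw [one_pow] at h2
  rw [h2, ← himg, Finset.prod_image (fun _ _ _ _ h => Units.val_injective h), ← Finset.prod_pow]
  have h3 := Finset.prod_comp (s := Finset.univ) (fun b : ℂˣ => 1 - (b : ℂ) * x) f
  refine h3.trans (Finset.prod_congr rfl fun b hb => ?_)
  rw [hfib b hb]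

/-- Convergence of Euler products. -/
lemma multipliable_euler {ι : Type*} (a : ι → ℂ) (h1 : ∀ i, ‖a i‖ < 1)
    (hs : Summable fun i => ‖a i‖) : Multipliable fun i => (1 - a i)⁻¹ := by
  have hs' : Summable fun i => ‖-a i‖ := by simpa using hs
  have hm : Multipliable fun i => 1 + -a i := multipliable_one_add_of_summable hs'
  have hne : ∏' i, (1 + -a i) ≠ 0 := by
    refine tprod_one_add_ne_zero_of_summable (fun i h => ?_) hs'
    have : a i = 1 := by linear_combination -h
    have h2 := h1 i
    rw [this] at h2
    simp at h2
  simpa [sub_eq_add_neg] using hm.inv₀ hne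


/-- Let `G` be a cyclic group of order `m ≥ 1` and `φ : P → G`.  With
`ζ_Q(s) = ∏_{p ∈ Q} (1 - N(p)^(-s))⁻¹`, `P_n = {p : ord(φ(p)) = n}`,
`L_P(s,ρ) = ∏_{p ∈ P} (1 - ρ(φ(p)) N(p)^(-s))⁻¹` and `Z_P(s) = ∏_ρ L_P(s,ρ)` (product over
all characters `ρ : G → ℂˣ`), for `Re s > 1` one has
`Z_P(s) = ∏_{n ∣ m} ζ_{P_n}(ns)^(m/n)`, all infinite products involved converging. -/
theorem ZP_eq_prod_zetaPn {P : Type*} [Countable P] [Infinite P] (N : P → ℝ)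
    (hN : ∀ p, 1 < N p)
    (hsum : ∀ σ : ℝ, 1 < σ → Summable fun p => (N p) ^ (-σ))
    {G : Type*} [CommGroup G] [Fintype G] [IsCyclic G] (m : ℕ) (hm : 1 ≤ m)
    (hcard : Fintype.card G = m)
    (φ : P → G) (s : ℂ) (hs : 1 < s.re) :
    (∀ ρ : G →* ℂˣ, Multipliable fun p : P => (1 - (ρ (φ p) : ℂ) * (N p : ℂ) ^ (-s))⁻¹) ∧
    (∀ n ∈ m.divisors,
      Multipliable fun p : {p : P // orderOf (φ p) = n} =>
        (1 - (N p.1 : ℂ) ^ (-((n : ℂ) * s)))⁻¹) ∧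
    (∏' ρ : G →* ℂˣ, ∏' p : P, (1 - (ρ (φ p) : ℂ) * (N p : ℂ) ^ (-s))⁻¹)
      = ∏ n ∈ m.divisors,
          (∏' p : {p : P // orderOf (φ p) = n}, (1 - (N p.1 : ℂ) ^ (-((n : ℂ) * s)))⁻¹)
            ^ (m / n) := by
  classical
  have hpos : ∀ p, 0 < N p := fun p => one_pos.trans (hN p)
  have hnorm : ∀ (w : ℂ) p, ‖(N p : ℂ) ^ (-w)‖ = N p ^ (-w.re) := fun w p => by
    rw [Complex.norm_cpow_eq_rpow_re_of_pos (hpos p), Complex.neg_re]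
  have hlt : ∀ (w : ℂ) p, 1 < w.re → ‖(N p : ℂ) ^ (-w)‖ < 1 := fun w p hw => by
    rw [hnorm]
    exact Real.rpow_lt_one_of_one_lt_of_neg (hN p) (by linarith)
  have hsm : ∀ w : ℂ, 1 < w.re → Summable fun p => ‖(N p : ℂ) ^ (-w)‖ := fun w hw => by
    simp_rw [hnorm]
    exact hsum _ hw
  have hρ : ∀ (ρ : G →* ℂˣ) (g : G), ‖(ρ g : ℂ)‖ = 1 := fun ρ g => by
    apply Complex.norm_eq_one_of_pow_eq_one (n := Fintype.card G) _ Fintype.card_ne_zero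
    rw [← Units.val_pow_eq_pow_val, ← map_pow, pow_card_eq_one, map_one, Units.val_one]
  have hA : ∀ ρ : G →* ℂˣ,
      Multipliable fun p : P => (1 - (ρ (φ p) : ℂ) * (N p : ℂ) ^ (-s))⁻¹ := fun ρ =>
    multipliable_euler _ (fun p => by rw [norm_mul, hρ, one_mul]; exact hlt s p hs)
      (by simpa only [norm_mul, hρ, one_mul] using hsm s hs)
  have hre : ∀ n ∈ m.divisors, 1 < ((n : ℂ) * s).re := fun n hn => by
    have h1 : (1 : ℝ) ≤ n := by exact_mod_cast Nat.pos_of_mem_divisors hn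
    have h2 : ((n : ℂ) * s).re = n * s.re := by simp
    rw [h2]
    nlinarith
  have hB : ∀ n ∈ m.divisors, Multipliable fun p : {p : P // orderOf (φ p) = n} =>
        (1 - (N p.1 : ℂ) ^ (-((n : ℂ) * s)))⁻¹ := fun n hn =>
    multipliable_euler _ (fun p => hlt _ p.1 (hre n hn))
      ((hsm _ (hre n hn)).comp_injective Subtype.val_injective)
  refine ⟨hA, hB, ?_⟩
  have : NeZero (Monoid.exponent G) := ⟨Monoid.exponent_ne_zero_of_finite⟩
  have : Finite (G →* ℂˣ) :=
    Finite.of_equiv _ (CommGroup.monoidHom_mulEquiv_of_hasEnoughRootsOfUnity G ℂ).some.symm.toEquiv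
  have : Fintype (G →* ℂˣ) := Fintype.ofFinite _
  rw [tprod_fintype, ← Multipliable.tprod_finsetProd (fun ρ _ => hA ρ)]
  let F : ℕ → P → ℂ := fun n =>
    Set.mulIndicator {p | orderOf (φ p) = n} fun p => (1 - (N p : ℂ) ^ (-((n : ℂ) * s)))⁻¹
  have hF : ∀ n ∈ m.divisors, Multipliable (F n) := fun n hn =>
    multipliable_subtype_iff_mulIndicator.1 (hB n hn)
  have hR : ∀ n ∈ m.divisors,
      (∏' p : {p : P // orderOf (φ p) = n}, (1 - (N p.1 : ℂ) ^ (-((n : ℂ) * s)))⁻¹) ^ (m / n)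
        = ∏' p, F n p ^ (m / n) := fun n hn => by
    rw [(hF n hn).tprod_pow]
    congr 1
    exact tprod_subtype {p | orderOf (φ p) = n} fun p => (1 - (N p : ℂ) ^ (-((n : ℂ) * s)))⁻¹
  rw [Finset.prod_congr rfl hR, ← Multipliable.tprod_finsetProd (fun n hn => (hF n hn).pow _)]
  refine tprod_congr fun p => ?_
  have hmem : orderOf (φ p) ∈ m.divisors :=
    Nat.mem_divisors.2 ⟨hcard ▸ orderOf_dvd_card, by omega⟩
  rw [Finset.prod_eq_single_of_mem _ hmem, Finset.prod_inv_distrib, local_factor, hcard]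
  · have hx : ((N p : ℂ) ^ (-s)) ^ orderOf (φ p) = (N p : ℂ) ^ (-((orderOf (φ p) : ℂ) * s)) := by
      rw [← Complex.cpow_nat_mul]
      congr 1
      ring
    simp [F, hx]
  · intro n _ hne
    have : p ∉ {p | orderOf (φ p) = n} := fun h => hne h.symm
    simp only [F, Set.mulIndicator_of_notMem this, one_pow]
end

section
/- Let q be a prime and G a cyclic group of order q. Then for every s with Re s > 1, ζ_{P_q}(s)^q / ζ_{P_q}(qs) = ζ_P(s)^q / Z_P(s); in particular all the infinite products involved converge and are nonzero. -/
lemma aux_prod {ι : Type*} (f : ι → ℂ) (hf : Summable fun i => ‖f i‖) (h1 : ∀ i, ‖f i‖ < 1) :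
    Multipliable (fun i => (1 - f i)⁻¹) ∧ (∏' i, (1 - f i)⁻¹) ≠ 0 := by
  have hs : Summable fun i => ‖-f i‖ := by simpa using hf
  have hm : Multipliable (fun i => 1 - f i) := by
    simpa [sub_eq_add_neg] using multipliable_one_add_of_summable hs
  have hne : ∏' i, (1 - f i) ≠ 0 := by
    have := tprod_one_add_ne_zero_of_summable (f := fun i => -f i) (fun i h => by
      have h2 : f i = 1 := by linear_combination -h
      have := h1 i
      simp [h2] at this) hs
    simpa [sub_eq_add_neg] using this
  exact ⟨hm.inv₀ hne, by rw [hm.tprod_inv₀ hne]; exact inv_ne_zero hne⟩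

lemma aux_gen {G : Type*} [Group G] [Fintype G] (q : ℕ) (hq : q.Prime)
    (hcard : Fintype.card G = q) (g : G) (hg : g ≠ 1) (x : G) : x ∈ Subgroup.zpowers g := by
  have := Fact.mk hq
  exact mem_zpowers_of_prime_card (p := q) (by rw [Nat.card_eq_fintype_card, hcard]) hg

lemma aux_finite {G : Type*} [Group G] [Fintype G] (q : ℕ) (hq : q.Prime)
    (hcard : Fintype.card G = q) : Finite (G →* ℂˣ) := by
  have : NeZero q := ⟨hq.ne_zero⟩
  refine Finite.of_injective (β := G → rootsOfUnity q ℂ)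
    (fun ρ x => ⟨ρ x, by rw [mem_rootsOfUnity, ← map_pow, ← hcard, pow_card_eq_one, map_one]⟩) ?_
  intro a b h
  refine MonoidHom.ext fun x => ?_
  have := congrFun h x
  simpa using this

lemma aux_char {G : Type*} [Group G] [Fintype G] (q : ℕ) (hq : q.Prime)
    (hcard : Fintype.card G = q) [Fintype (G →* ℂˣ)] (g : G) (hg : g ≠ 1) (F : ℂ → ℂ) :
    ∏ ρ : G →* ℂˣ, F (ρ g : ℂ) = ∏ z ∈ Polynomial.nthRootsFinset q (1 : ℂ), F z := by
  have hgen := aux_gen q hq hcard g hg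
  refine Finset.prod_bij (fun ρ _ => (ρ g : ℂ)) ?_ ?_ ?_ ?_
  · intro ρ _
    rw [Polynomial.mem_nthRootsFinset hq.pos, ← Units.val_pow_eq_pow_val, ← map_pow, ← hcard,
      pow_card_eq_one, map_one, Units.val_one]
  · intro a _ b _ h
    exact (MonoidHom.eq_iff_eq_on_generator hgen a b).mpr (Units.ext h)
  · intro z hz
    rw [Polynomial.mem_nthRootsFinset hq.pos] at hz
    let u : ℂˣ := Units.ofPowEqOne z q hz hq.ne_zero
    have hu : orderOf u ∣ orderOf g := by
      rw [orderOf_eq_card_of_forall_mem_zpowers hgen, Nat.card_eq_fintype_card, hcard,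
        orderOf_dvd_iff_pow_eq_one]
      ext; simpa [u] using hz
    refine ⟨monoidHomOfForallMemZpowers hgen hu, Finset.mem_univ _, ?_⟩
    rw [monoidHomOfForallMemZpowers_apply_gen]
    simp [u]
  · intros; rfl

lemma aux_card {G : Type*} [Group G] [Fintype G] (q : ℕ) (hq : q.Prime)
    (hcard : Fintype.card G = q) [Fintype (G →* ℂˣ)] : Fintype.card (G →* ℂˣ) = q := by
  have : Nontrivial G := Fintype.one_lt_card_iff_nontrivial.mp (hcard ▸ hq.one_lt)
  obtain ⟨g, hg⟩ := exists_ne (1 : G)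
  have h := aux_char q hq hcard g hg (fun _ => 2)
  rw [Finset.prod_const, Finset.prod_const,
    (Complex.isPrimitiveRoot_exp q hq.ne_zero).card_nthRootsFinset] at h
  have h' : (2:ℕ) ^ Fintype.card (G →* ℂˣ) = 2 ^ q := by exact_mod_cast h
  exact Nat.pow_right_injective le_rfl h'


/-- Let `q` be a prime, `G` a cyclic group of order `q`, `φ : P → G`,
`P_q = {p : φ(p) ≠ 1}`.  With `ζ_Q(s) = ∏_{p ∈ Q} (1 - N(p)^(-s))⁻¹`,
`L_P(s,ρ) = ∏_{p ∈ P} (1 - ρ(φ(p)) N(p)^(-s))⁻¹` and `Z_P(s) = ∏_ρ L_P(s,ρ)` (product over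
all characters `ρ : G → ℂˣ`), for `Re s > 1` one has
`ζ_{P_q}(s)^q / ζ_{P_q}(qs) = ζ_P(s)^q / Z_P(s)`, all products involved converging and
being nonzero. -/
theorem zetaPq_functional_equation {P : Type*} [Countable P] [Infinite P] (N : P → ℝ)
    (hN : ∀ p, 1 < N p)
    (hsum : ∀ σ : ℝ, 1 < σ → Summable fun p => (N p) ^ (-σ))
    {G : Type*} [Group G] [Fintype G] (q : ℕ) (hq : q.Prime) (hcard : Fintype.card G = q)
    (φ : P → G) (s : ℂ) (hs : 1 < s.re) :
    Multipliable (fun p : {p : P // φ p ≠ 1} => (1 - (N p.1 : ℂ) ^ (-s))⁻¹) ∧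
    Multipliable (fun p : {p : P // φ p ≠ 1} => (1 - (N p.1 : ℂ) ^ (-((q : ℂ) * s)))⁻¹) ∧
    Multipliable (fun p : P => (1 - (N p : ℂ) ^ (-s))⁻¹) ∧
    (∀ ρ : G →* ℂˣ, Multipliable fun p : P => (1 - (ρ (φ p) : ℂ) * (N p : ℂ) ^ (-s))⁻¹) ∧
    (∏' p : {p : P // φ p ≠ 1}, (1 - (N p.1 : ℂ) ^ (-s))⁻¹) ≠ 0 ∧
    (∏' p : {p : P // φ p ≠ 1}, (1 - (N p.1 : ℂ) ^ (-((q : ℂ) * s)))⁻¹) ≠ 0 ∧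
    (∏' p : P, (1 - (N p : ℂ) ^ (-s))⁻¹) ≠ 0 ∧
    (∀ ρ : G →* ℂˣ, (∏' p : P, (1 - (ρ (φ p) : ℂ) * (N p : ℂ) ^ (-s))⁻¹) ≠ 0) ∧
    (∏' p : {p : P // φ p ≠ 1}, (1 - (N p.1 : ℂ) ^ (-s))⁻¹) ^ q
        / (∏' p : {p : P // φ p ≠ 1}, (1 - (N p.1 : ℂ) ^ (-((q : ℂ) * s)))⁻¹)
      = (∏' p : P, (1 - (N p : ℂ) ^ (-s))⁻¹) ^ q
        / (∏' ρ : G →* ℂˣ, ∏' p : P, (1 - (ρ (φ p) : ℂ) * (N p : ℂ) ^ (-s))⁻¹) := by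
  classical
  have hx : ∀ p (t : ℂ), ‖(N p : ℂ) ^ t‖ = N p ^ t.re := fun p t =>
    Complex.norm_cpow_eq_rpow_re_of_pos (zero_lt_one.trans (hN p)) t
  have hsm : ∀ t : ℂ, 1 < t.re → Summable fun p => ‖(N p : ℂ) ^ (-t)‖ := fun t ht => by
    simp only [hx, Complex.neg_re]; exact hsum _ ht
  have hlt : ∀ t : ℂ, 1 < t.re → ∀ p, ‖(N p : ℂ) ^ (-t)‖ < 1 := fun t ht p => by
    rw [hx, Complex.neg_re]
    exact Real.rpow_lt_one_of_one_lt_of_neg (hN p) (by linarith)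
  have hqs : 1 < ((q : ℂ) * s).re := by
    have : (2 : ℝ) ≤ q := by exact_mod_cast hq.two_le
    simp only [Complex.mul_re, Complex.natCast_re, Complex.natCast_im, zero_mul, sub_zero]
    nlinarith
  have hρ : ∀ (ρ : G →* ℂˣ) (g : G), ‖(ρ g : ℂ)‖ = 1 := fun ρ g => by
    refine Complex.norm_eq_one_of_pow_eq_one (n := q) ?_ hq.ne_zero
    rw [← Units.val_pow_eq_pow_val, ← map_pow, ← hcard, pow_card_eq_one, map_one, Units.val_one]
  obtain ⟨m1, n1⟩ := aux_prod (fun p : {p : P // φ p ≠ 1} => (N p.1 : ℂ) ^ (-s))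
    ((hsm s hs).subtype {p | φ p ≠ 1}) (fun p => hlt s hs p.1)
  obtain ⟨m2, n2⟩ := aux_prod (fun p : {p : P // φ p ≠ 1} => (N p.1 : ℂ) ^ (-((q : ℂ) * s)))
    ((hsm _ hqs).subtype {p | φ p ≠ 1}) (fun p => hlt _ hqs p.1)
  obtain ⟨m3, n3⟩ := aux_prod (fun p : P => (N p : ℂ) ^ (-s)) (hsm s hs) (hlt s hs)
  have h4 := fun ρ : G →* ℂˣ => aux_prod (fun p : P => (ρ (φ p) : ℂ) * (N p : ℂ) ^ (-s))
    (by simpa [hρ] using hsm s hs) (by simpa [hρ] using hlt s hs)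
  refine ⟨m1, m2, m3, fun ρ => (h4 ρ).1, n1, n2, n3, fun ρ => (h4 ρ).2, ?_⟩
  have := aux_finite q hq hcard
  have := Fintype.ofFinite (G →* ℂˣ)
  rw [tprod_fintype (β := G →* ℂˣ), div_eq_div_iff n2 (Finset.prod_ne_zero_iff.mpr fun ρ _ => (h4 ρ).2),
    ← Multipliable.tprod_finsetProd (fun ρ _ => (h4 ρ).1)]
  have e1 := tprod_subtype {p : P | φ p ≠ 1} (fun p => (1 - (N p : ℂ) ^ (-s))⁻¹)
  have e2 := tprod_subtype {p : P | φ p ≠ 1} (fun p => (1 - (N p : ℂ) ^ (-((q : ℂ) * s)))⁻¹)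
  have k1 := (multipliable_subtype_iff_mulIndicator (s := {p : P | φ p ≠ 1})
    (f := fun p => (1 - (N p : ℂ) ^ (-s))⁻¹)).mp m1
  have k2 := (multipliable_subtype_iff_mulIndicator (s := {p : P | φ p ≠ 1})
    (f := fun p => (1 - (N p : ℂ) ^ (-((q : ℂ) * s)))⁻¹)).mp m2
  have k4 : Multipliable fun p => ∏ ρ : G →* ℂˣ, (1 - (ρ (φ p) : ℂ) * (N p : ℂ) ^ (-s))⁻¹ :=
    multipliable_prod (fun ρ _ => (h4 ρ).1)
  erw [e1, e2]
  rw [← k1.tprod_pow, ← m3.tprod_pow, ← (k1.pow q).tprod_mul k4, ← (m3.pow q).tprod_mul k2]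
  refine tprod_congr fun p => ?_
  by_cases hp : φ p = 1
  · simp [Set.mulIndicator, hp, aux_card q hq hcard]
  · rw [Set.mulIndicator_of_mem (by exact hp), Set.mulIndicator_of_mem (by exact hp),
      aux_char q hq hcard (φ p) hp (fun z => (1 - z * (N p : ℂ) ^ (-s))⁻¹), Finset.prod_inv_distrib,
      ← (Complex.isPrimitiveRoot_exp q hq.ne_zero).pow_sub_pow_eq_prod_sub_mul 1 _ hq.pos,
      one_pow, ← Complex.cpow_nat_mul, mul_neg]
end

section
/- Let q ≥ 2 be an integer, let f be a nonvanishing holomorphic function on the half-plane {Re s > 1}, and let g be a meromorphic function on ℂ such that f(s)^q = f(qs)·g(s) for all s with Re s > 1. Then for every integer r ≥ 1 there exists a meromorphic function F_r on the half-plane {Re s > 1/q^r} such that F_r(s) = f(s)^{q^r} for all s with Re s > 1. -/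
/-- Let `q ≥ 2`, `f` a nonvanishing holomorphic function on `{Re s > 1}`, and `g` meromorphic
on `ℂ` with `f(s)^q = f(qs) * g(s)` for `Re s > 1`.  Then for every `r ≥ 1` there is a
meromorphic function `F_r` on `{Re s > 1/q^r}` with `F_r(s) = f(s)^(q^r)` for `Re s > 1`. -/
theorem exists_meromorphic_continuation_pow (q : ℕ) (hq : 2 ≤ q) (f g : ℂ → ℂ)
    (hf_holo : DifferentiableOn ℂ f {s : ℂ | 1 < s.re})
    (hf_ne : ∀ s : ℂ, 1 < s.re → f s ≠ 0)
    (hg : MeromorphicOn g Set.univ)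
    (hfg : ∀ s : ℂ, 1 < s.re → f s ^ q = f ((q : ℂ) * s) * g s)
    (r : ℕ) (hr : 1 ≤ r) :
    ∃ F : ℂ → ℂ, MeromorphicOn F {s : ℂ | 1 / (q : ℝ) ^ r < s.re} ∧
      ∀ s : ℂ, 1 < s.re → F s = f s ^ (q ^ r) := by
  clear hr
  have hq0 : (0 : ℝ) < q := by
    have : 0 < q := by omega
    exact_mod_cast this
  have hq1 : (1 : ℝ) ≤ q := by
    have : 1 ≤ q := by omega
    exact_mod_cast this
  have hre : ∀ s : ℂ, ((q : ℂ) * s).re = q * s.re := by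
    intro s
    simp
  induction r with
  | zero =>
    refine ⟨f, ?_, fun s _ => by simp⟩
    intro s hs
    have hopen : IsOpen {s : ℂ | 1 < s.re} := isOpen_lt continuous_const Complex.continuous_re
    have hs' : s ∈ {s : ℂ | 1 < s.re} := by simpa using hs
    exact (hf_holo.analyticAt (hopen.mem_nhds hs')).meromorphicAt
  | succ r ih =>
    obtain ⟨F, hF, hFe⟩ := ih
    refine ⟨fun s => F ((q : ℂ) * s) * g s ^ (q ^ r), ?_, ?_⟩
    · intro s hs
      have hs' : 1 / (q : ℝ) ^ (r + 1) < s.re := hs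
      have hqs : 1 / (q : ℝ) ^ r < ((q : ℂ) * s).re := by
        rw [hre]
        calc 1 / (q : ℝ) ^ r = q * (1 / (q : ℝ) ^ (r + 1)) := by
              field_simp
              exact pow_succ _ _
          _ < q * s.re := mul_lt_mul_of_pos_left hs' hq0
      have h1 : MeromorphicAt F ((q : ℂ) * s) := hF _ hqs
      have h2 : AnalyticAt ℂ (fun z : ℂ => (q : ℂ) * z) s := by fun_prop
      have h3 : MeromorphicAt (fun z : ℂ => F ((q : ℂ) * z)) s :=
        MeromorphicAt.comp_analyticAt (f := F) (g := fun z : ℂ => (q : ℂ) * z) h1 h2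
      exact h3.mul ((hg s (Set.mem_univ s)).pow (q ^ r))
    · intro s hs
      have hqs : 1 < ((q : ℂ) * s).re := by
        rw [hre]
        nlinarith
      simp only
      rw [hFe _ hqs, ← mul_pow, ← hfg s hs, ← pow_mul, pow_succ']
end

section
/- Let q be a prime and G a cyclic group of order q. Assume: (i) ζ_P extends to a meromorphic function on ℂ which is holomorphic and nonvanishing on {Re s > 1} and has a simple pole at s = 1; (ii) for every nontrivial character ρ of G, L_P(s,ρ) extends to a meromorphic function on ℂ which is holomorphic and nonvanishing on {Re s ≥ 1}. Then for every integer r ≥ 1 there exists a meromorphic function F_r on the half-plane {Re s > 1/q^r} such that F_r(s) = ζ_{P_q}(s)^{q^r} for all s with Re s > 1. -/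
open Filter Topology

lemma aux_norm {x : ℝ} (hx : 1 < x) (s : ℂ) : ‖(x : ℂ) ^ (-s)‖ = x ^ (-s.re) := by
  rw [Complex.norm_cpow_eq_rpow_re_of_pos (by linarith)]; simp

lemma aux_norm_lt {x : ℝ} (hx : 1 < x) (s : ℂ) (hs : 0 < s.re) (a : ℂ) (ha : ‖a‖ ≤ 1) :
    ‖a * (x : ℂ) ^ (-s)‖ < 1 := by
  rw [norm_mul, aux_norm hx]
  have h1 : x ^ (-s.re) < 1 := Real.rpow_lt_one_of_one_lt_of_neg hx (by linarith)
  have h2 : 0 ≤ x ^ (-s.re) := by positivity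
  nlinarith [norm_nonneg a]

lemma aux_ne {x : ℝ} (hx : 1 < x) (s : ℂ) (hs : 0 < s.re) (a : ℂ) (ha : ‖a‖ ≤ 1) :
    1 - a * (x : ℂ) ^ (-s) ≠ 0 := by
  intro h
  have := aux_norm_lt hx s hs a ha
  rw [← sub_eq_zero.mp h] at this
  simp at this

lemma euler_one_sub {ι : Type*} (M : ι → ℝ) (hM : ∀ i, 1 < M i)
    (hsum : ∀ σ : ℝ, 1 < σ → Summable fun i => (M i) ^ (-σ))
    (a : ι → ℂ) (ha : ∀ i, ‖a i‖ ≤ 1) (s : ℂ) (hs : 1 < s.re) :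
    Multipliable (fun i => 1 - a i * (M i : ℂ) ^ (-s)) ∧
      ∏' i, (1 - a i * (M i : ℂ) ^ (-s)) ≠ 0 := by
  have hS : Summable (fun i => ‖-(a i * (M i : ℂ) ^ (-s))‖) := by
    refine (hsum s.re hs).of_nonneg_of_le (fun _ => norm_nonneg _) (fun i => ?_)
    rw [norm_neg, norm_mul, aux_norm (hM i)]
    have h2 : 0 ≤ M i ^ (-s.re) := by have := hM i; positivity
    nlinarith [ha i]
  simp only [sub_eq_add_neg]
  refine ⟨multipliable_one_add_of_summable hS, tprod_one_add_ne_zero_of_summable (fun i => ?_) hS⟩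
  rw [← sub_eq_add_neg]
  exact aux_ne (hM i) s (by linarith) _ (ha i)

lemma euler_hasProd {ι : Type*} (M : ι → ℝ) (hM : ∀ i, 1 < M i)
    (hsum : ∀ σ : ℝ, 1 < σ → Summable fun i => (M i) ^ (-σ))
    (a : ι → ℂ) (ha : ∀ i, ‖a i‖ ≤ 1) (s : ℂ) (hs : 1 < s.re) :
    HasProd (fun i => (1 - a i * (M i : ℂ) ^ (-s))⁻¹) (∏' i, (1 - a i * (M i : ℂ) ^ (-s))⁻¹) := by
  obtain ⟨h1, h2⟩ := euler_one_sub M hM hsum a ha s hs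
  exact (h1.inv₀ h2).hasProd

lemma euler_mero {ι : Type*} (M : ι → ℝ) (hM : ∀ i, 1 < M i)
    (hsum : ∀ σ : ℝ, 1 < σ → Summable fun i => (M i) ^ (-σ)) :
    MeromorphicOn (fun s : ℂ => ∏' i, (1 - (M i : ℂ) ^ (-s))⁻¹) {s : ℂ | 1 < s.re} := by
  intro s hs
  simp only [Set.mem_ofPred_eq] at hs
  obtain ⟨σ, h1, h2⟩ := exists_between hs
  have hopen : IsOpen {z : ℂ | σ < z.re} := isOpen_lt continuous_const Complex.continuous_re
  have hd : ∀ i, Differentiable ℂ (fun z : ℂ => -((M i : ℂ) ^ (-z))) := fun i => by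
    have : (M i : ℂ) ≠ 0 := by have := hM i; exact_mod_cast (by linarith : M i ≠ 0)
    intro z
    exact ((differentiableAt_id.neg).const_cpow (Or.inl this)).neg
  have key := Summable.hasProdLocallyUniformlyOn_one_add (f := fun i (z : ℂ) => -((M i : ℂ) ^ (-z)))
    hopen (hsum σ h1) (Eventually.of_forall fun i z hz => by
      rw [norm_neg, aux_norm (hM i)]
      exact Real.rpow_le_rpow_of_exponent_le (hM i).le (by simp only [Set.mem_ofPred_eq] at hz; linarith))
    (fun i => (hd i).continuous.continuousOn)
  have hdiff : DifferentiableOn ℂ (fun z : ℂ => ∏' i, (1 + -((M i : ℂ) ^ (-z)))) {z : ℂ | σ < z.re} := by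
    refine TendstoLocallyUniformlyOn.differentiableOn
      (hasProdLocallyUniformlyOn_iff_tendstoLocallyUniformlyOn.mp key)
      (Eventually.of_forall fun t => ?_) hopen
    exact (DifferentiableOn.fun_finsetProd (fun i _ => ((hd i).const_add 1).differentiableOn))
  have hm := (hdiff.analyticAt (hopen.mem_nhds h2)).meromorphicAt.inv
  refine hm.congr ?_
  refine Filter.Eventually.filter_mono nhdsWithin_le_nhds ?_
  filter_upwards [hopen.mem_nhds h2] with z hz
  have hz' : σ < z.re := hz
  obtain ⟨e1, e2⟩ := euler_one_sub M hM hsum (fun _ => 1) (by simp) z (by linarith)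
  simp only [one_mul] at e1 e2
  rw [e1.tprod_inv₀ e2]
  simp [sub_eq_add_neg]

lemma exists_char {G : Type*} [Group G] [Fintype G] (q : ℕ) (hq : q.Prime)
    (hcard : Fintype.card G = q) :
    ∃ ρ : G →* ℂˣ, ∀ g, g ≠ 1 → IsPrimitiveRoot (ρ g : ℂ) q := by
  haveI : Fact q.Prime := ⟨hq⟩
  have hc : Nat.card G = q := by rw [Nat.card_eq_fintype_card, hcard]
  haveI : IsCyclic G := isCyclic_of_prime_card hc
  letI : CommGroup G := IsCyclic.commGroup
  haveI : Nontrivial G := Fintype.one_lt_card_iff_nontrivial.mp (hcard ▸ hq.one_lt)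
  obtain ⟨g₀, hg₀⟩ := exists_ne (1 : G)
  obtain ⟨ρ, hρ⟩ := CommGroup.exists_apply_ne_one_of_hasEnoughRootsOfUnity G ℂ hg₀
  refine ⟨ρ, fun g hg => ?_⟩
  have hne : ρ g ≠ 1 := by
    intro h
    apply hρ
    obtain ⟨k, hk⟩ := mem_zpowers_of_prime_card (g := g) (g' := g₀) hc hg
    simp only at hk
    rw [← hk, map_zpow, h, one_zpow]
  have ho : orderOf (ρ g) = q := by
    apply orderOf_eq_prime _ hne
    rw [← map_pow, ← hcard, pow_card_eq_one, map_one]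
  rw [IsPrimitiveRoot.coe_units_iff, ← ho]
  exact IsPrimitiveRoot.orderOf _

lemma prod_root {q : ℕ} (hq : 0 < q) {z : ℂ} (hz : IsPrimitiveRoot z q) (x : ℂ) :
    ∏ j ∈ Finset.range q, (1 - z ^ j * x) = 1 - x ^ q := by
  have := hz.pow_sub_pow_eq_prod_sub_mul 1 x hq
  rw [one_pow] at this
  rw [this]
  haveI : NeZero q := ⟨hq.ne'⟩
  refine Finset.prod_bij (fun j _ => z ^ j) ?_ ?_ ?_ ?_
  · intro j hj
    rw [Polynomial.mem_nthRootsFinset hq, ← pow_mul, mul_comm, pow_mul, hz.pow_eq_one, one_pow]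
  · intro i hi j hj h
    exact hz.pow_inj (Finset.mem_range.mp hi) (Finset.mem_range.mp hj) h
  · intro b hb
    rw [Polynomial.mem_nthRootsFinset hq] at hb
    obtain ⟨i, hi, h⟩ := hz.eq_pow_of_pow_eq_one hb
    exact ⟨i, Finset.mem_range.mpr hi, h⟩
  · intros; rfl

lemma local_id {G : Type*} [Group G] {q : ℕ} (hq : q.Prime) (ρ : G →* ℂˣ)
    (hρ : ∀ g, g ≠ 1 → IsPrimitiveRoot (ρ g : ℂ) q) (g : G) [Decidable (g ≠ 1)] (x : ℂ)
    (hx : ‖x‖ < 1) :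
    ((1 - x)⁻¹) ^ (q - 1) * (if g ≠ 1 then (1 - x ^ q)⁻¹ else 1) =
      (if g ≠ 1 then (1 - x)⁻¹ else 1) ^ q *
        ∏ j ∈ Finset.Ico 1 q, (1 - ((ρ ^ j) g : ℂˣ) * x)⁻¹ := by
  have hx1 : 1 - x ≠ 0 := by
    intro h
    rw [← sub_eq_zero.mp h] at hx
    simp at hx
  by_cases hg : g = 1
  · subst hg; simp
  · have h := prod_root hq.pos (hρ g hg) x
    rw [Finset.range_eq_Ico, Finset.prod_eq_prod_Ico_succ_bot hq.pos] at h
    simp only [ne_eq, hg, not_false_eq_true, if_true, MonoidHom.pow_apply, Units.val_pow_eq_pow_val,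
      Finset.prod_inv_distrib]
    rw [← h]
    simp only [pow_zero, one_mul, zero_add, mul_inv]
    obtain ⟨k, rfl⟩ : ∃ k, q = k + 1 := ⟨q - 1, by have := hq.pos; omega⟩
    simp only [Nat.add_sub_cancel, pow_succ]
    ring

/-- Framework: `q` prime, `G` cyclic of order `q`, `φ : P → G`, `P_q = {p : φ(p) ≠ 1}`.
Assume (i) `ζ_P` extends to a function `Z` meromorphic on `ℂ`, holomorphic and nonvanishing
on `{Re s > 1}`, with a simple pole at `s = 1`; (ii) for every nontrivial character `ρ`,
`L_P(·,ρ)` extends to a function meromorphic on `ℂ`, holomorphic and nonvanishing on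
`{Re s ≥ 1}`.  Then for every `r ≥ 1` there is a meromorphic `F_r` on `{Re s > 1/q^r}` with
`F_r(s) = ζ_{P_q}(s)^(q^r)` for `Re s > 1`. -/
theorem zetaPq_pow_meromorphic_continuation {P : Type*} [Countable P] [Infinite P]
    (N : P → ℝ) (hN : ∀ p, 1 < N p)
    (hsum : ∀ σ : ℝ, 1 < σ → Summable fun p => (N p) ^ (-σ))
    {G : Type*} [Group G] [Fintype G] (q : ℕ) (hq : q.Prime) (hcard : Fintype.card G = q)
    (φ : P → G)
    (Z : ℂ → ℂ)
    (hZ_eq : ∀ s : ℂ, 1 < s.re → Z s = ∏' p : P, (1 - (N p : ℂ) ^ (-s))⁻¹)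
    (hZ_mero : MeromorphicOn Z Set.univ)
    (hZ_holo : DifferentiableOn ℂ Z {s : ℂ | 1 < s.re})
    (hZ_ne : ∀ s : ℂ, 1 < s.re → Z s ≠ 0)
    (hZ_pole : ∃ c : ℂ, c ≠ 0 ∧ Tendsto (fun s : ℂ => (s - 1) * Z s) (𝓝[≠] 1) (𝓝 c))
    (hL : ∀ ρ : G →* ℂˣ, ρ ≠ 1 → ∃ L : ℂ → ℂ,
      (∀ s : ℂ, 1 < s.re → L s = ∏' p : P, (1 - (ρ (φ p) : ℂ) * (N p : ℂ) ^ (-s))⁻¹) ∧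
      MeromorphicOn L Set.univ ∧
      (∀ s : ℂ, 1 ≤ s.re → AnalyticAt ℂ L s ∧ L s ≠ 0))
    (r : ℕ) (hr : 1 ≤ r) :
    ∃ F : ℂ → ℂ, MeromorphicOn F {s : ℂ | 1 / (q : ℝ) ^ r < s.re} ∧
      ∀ s : ℂ, 1 < s.re →
        F s = (∏' p : {p : P // φ p ≠ 1}, (1 - (N p.1 : ℂ) ^ (-s))⁻¹) ^ (q ^ r) := by
  classical
  obtain ⟨ρ, hρ⟩ := exists_char q hq hcard
  -- choose the L-functions of the nontrivial powers of `ρ`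
  haveI : Nontrivial G := Fintype.one_lt_card_iff_nontrivial.mp (hcard ▸ hq.one_lt)
  obtain ⟨g₀, hg₀⟩ := exists_ne (1 : G)
  have hρne : ∀ j ∈ Finset.Ico 1 q, ρ ^ j ≠ 1 := by
    intro j hj h
    rw [Finset.mem_Ico] at hj
    have h1 : ((ρ ^ j) g₀ : ℂˣ) = 1 := by rw [h]; rfl
    have h2 : (ρ g₀ : ℂ) ^ j = 1 := by
      rw [← Units.val_pow_eq_pow_val, ← MonoidHom.pow_apply, h1, Units.val_one]
    exact (hρ g₀ hg₀).pow_ne_one_of_pos_of_lt (by omega) hj.2 h2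
  have hL' : ∀ j : ℕ, ∃ L : ℂ → ℂ, j ∈ Finset.Ico 1 q →
      (∀ s : ℂ, 1 < s.re → L s = ∏' p : P, (1 - ((ρ ^ j) (φ p) : ℂ) * (N p : ℂ) ^ (-s))⁻¹) ∧
      MeromorphicOn L Set.univ ∧
      (∀ s : ℂ, 1 ≤ s.re → AnalyticAt ℂ L s ∧ L s ≠ 0) := by
    intro j
    by_cases hj : j ∈ Finset.Ico 1 q
    · obtain ⟨L, h⟩ := hL (ρ ^ j) (hρne j hj)
      exact ⟨L, fun _ => h⟩
    · exact ⟨0, fun h => absurd h hj⟩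
  choose L hL' using hL'
  set W : ℂ → ℂ := fun s => ∏' p : {p : P // φ p ≠ 1}, (1 - (N p.1 : ℂ) ^ (-s))⁻¹ with hW
  have hMN : ∀ p : {p : P // φ p ≠ 1}, 1 < N p.1 := fun p => hN p.1
  have hMs : ∀ σ : ℝ, 1 < σ → Summable fun p : {p : P // φ p ≠ 1} => (N p.1) ^ (-σ) :=
    fun σ h => (hsum σ h).comp_injective Subtype.val_injective
  have hWprod : ∀ s : ℂ, 1 < s.re →
      HasProd (fun p : P => if φ p ≠ 1 then (1 - (N p : ℂ) ^ (-s))⁻¹ else 1) (W s) := by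
    intro s hs
    have h := euler_hasProd (fun p : {p : P // φ p ≠ 1} => N p.1) hMN hMs (fun _ => 1) (by simp) s hs
    simp only [one_mul] at h
    have h2 := (hasProd_subtype_iff_mulIndicator (f := fun p : P => (1 - (N p : ℂ) ^ (-s))⁻¹)
      (s := {p : P | φ p ≠ 1})).mp h
    convert h2 using 1
    funext p
    simp [Set.mulIndicator_apply]
  have hq1 : (1 : ℝ) < q := by exact_mod_cast hq.one_lt
  have hρnorm : ∀ (j : ℕ) (g : G), ‖(((ρ ^ j) g : ℂˣ) : ℂ)‖ ≤ 1 := by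
    intro j g
    refine (Complex.norm_eq_one_of_pow_eq_one (n := q) ?_ hq.ne_zero).le
    rw [← Units.val_pow_eq_pow_val, ← map_pow, ← hcard, pow_card_eq_one, map_one, Units.val_one]
  have key : ∀ s : ℂ, 1 < s.re →
      Z s ^ (q - 1) * W (q * s) = W s ^ q * ∏ j ∈ Finset.Ico 1 q, L j s := by
    intro s hs
    have hqs : 1 < ((q : ℂ) * s).re := by
      simp only [Complex.mul_re, Complex.natCast_re, Complex.natCast_im, zero_mul, sub_zero]
      nlinarith
    have hZp : HasProd (fun p : P => (1 - (N p : ℂ) ^ (-s))⁻¹) (Z s) := by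
      have h := euler_hasProd N hN hsum (fun _ => 1) (by simp) s hs
      simp only [one_mul] at h
      rw [hZ_eq s hs]; exact h
    have hLp : ∀ j ∈ Finset.Ico 1 q, HasProd
        (fun p : P => (1 - ((ρ ^ j) (φ p) : ℂ) * (N p : ℂ) ^ (-s))⁻¹) (L j s) := by
      intro j hj
      rw [(hL' j hj).1 s hs]
      exact euler_hasProd N hN hsum (fun p => ((ρ ^ j) (φ p) : ℂ)) (fun p => hρnorm j _) s hs
    have hpow : ∀ {f : P → ℂ} {a : ℂ} (n : ℕ), HasProd f a → HasProd (fun p => f p ^ n) (a ^ n) := by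
      intro f a n h
      simpa using hasProd_prod (s := Finset.range n) (f := fun _ => f) (a := fun _ => a) (fun _ _ => h)
    have h1 := (hpow (q - 1) hZp).mul (hWprod _ hqs)
    have h2 := (hpow q (hWprod s hs)).mul (hasProd_prod hLp)
    refine h1.unique ?_
    convert h2 using 1
    funext p
    have hN0 : (N p : ℂ) ≠ 0 := by have := hN p; exact_mod_cast (by linarith : N p ≠ 0)
    have hx : (N p : ℂ) ^ (-((q : ℂ) * s)) = ((N p : ℂ) ^ (-s)) ^ q := by
      rw [← Complex.cpow_nat_mul]; congr 1; ring
    rw [hx]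
    refine local_id hq ρ hρ (φ p) _ ?_
    simpa using aux_norm_lt (hN p) s (by linarith) 1 (by simp)
  -- induction on `r`
  clear hr
  induction r with
  | zero =>
    refine ⟨W, ?_, fun s _ => by simp [hW]⟩
    simpa using euler_mero (fun p : {p : P // φ p ≠ 1} => N p.1) hMN hMs
  | succ r ih =>
    obtain ⟨F, hF, hFe⟩ := ih
    refine ⟨fun s => (Z s ^ (q - 1) / ∏ j ∈ Finset.Ico 1 q, L j s) ^ (q ^ r) * F (q * s), ?_, ?_⟩
    · intro s hs
      have h1 : MeromorphicAt (fun s => ∏ j ∈ Finset.Ico 1 q, L j s) s :=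
        MeromorphicAt.fun_prod (fun j hj => (hL' j hj).2.1 s trivial)
      have h2 : MeromorphicAt Z s := hZ_mero s trivial
      have h3 : MeromorphicAt F ((q : ℂ) * s) := by
        apply hF
        simp only [Set.mem_ofPred_eq, Complex.mul_re, Complex.natCast_re, Complex.natCast_im,
          zero_mul, sub_zero] at hs ⊢
        rw [pow_succ, ← div_div, div_lt_iff₀ (by linarith)] at hs
        linarith
      have h4 : MeromorphicAt (fun s : ℂ => F ((q : ℂ) * s)) s :=
        MeromorphicAt.comp_analyticAt (f := F) (g := fun s : ℂ => (q : ℂ) * s) h3 (by fun_prop)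
      exact (((h2.fun_pow _).fun_div h1).fun_pow _).fun_mul h4
    · intro s hs
      have hqs : 1 < ((q : ℂ) * s).re := by
        simp only [Complex.mul_re, Complex.natCast_re, Complex.natCast_im, zero_mul, sub_zero]
        nlinarith
      have hne : ∏ j ∈ Finset.Ico 1 q, L j s ≠ 0 :=
        Finset.prod_ne_zero_iff.mpr (fun j hj => ((hL' j hj).2.2 s hs.le).2)
      have e1 := hFe _ hqs
      have e2 := key s hs
      simp only [] at e1 ⊢
      change F (q * s) = W (q * s) ^ q ^ r at e1
      change _ = W s ^ q ^ (r + 1)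
      rw [e1, ← mul_pow, div_mul_eq_mul_div, e2, mul_div_assoc, div_self hne, mul_one, ← pow_mul,
        pow_succ']
end

section
/- Let q ≥ 2 be an integer, let f be a nonvanishing holomorphic function on {Re s > 1}, and let g be a meromorphic function on ℂ such that f(s)^q = f(qs)·g(s) for Re s > 1. Assume that g is holomorphic and nonvanishing on {Re s > 1}, that g has a pole of order q − 1 at s = 1, and that g is holomorphic and nonvanishing at the points s = q^{-l} for every integer l ≥ 1. Then for every r ≥ 1, the meromorphic continuation F_r of f^{q^r} to {Re s > 1/q^r} has, for each 0 ≤ i ≤ r − 1, a pole of order (q − 1)·q^{r−i−1} at the point s = q^{-i}. -/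
open Filter Topology

lemma cpo_identity (q : ℕ) (hq : 2 ≤ q) (f g : ℂ → ℂ)
    (hfg : ∀ s : ℂ, 1 < s.re → f s ^ q = f ((q : ℂ) * s) * g s) (r : ℕ) (s : ℂ) (hs : 1 < s.re) :
    f s ^ (q ^ r) = f ((q : ℂ) ^ r * s) *
      ∏ j ∈ Finset.range r, g ((q : ℂ) ^ j * s) ^ (q ^ (r - j - 1)) := by
  induction r with
  | zero => simp
  | succ r ih =>
    have hre : 1 < ((q : ℂ) ^ r * s).re := by
      have h1 : ((q : ℂ) ^ r * s).re = (q : ℝ) ^ r * s.re := by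
        have : ((q : ℂ) ^ r) = (((q : ℝ) ^ r : ℝ) : ℂ) := by push_cast; rfl
        rw [this, Complex.re_ofReal_mul]
      rw [h1]
      have : (1 : ℝ) ≤ (q : ℝ) ^ r := one_le_pow₀ (by exact_mod_cast (by omega : 1 ≤ q))
      nlinarith
    have h2 := hfg _ hre
    rw [pow_succ q r, pow_mul, ih, mul_pow, h2, Finset.prod_range_succ, ← Finset.prod_pow]
    have h3 : ∀ j ∈ Finset.range r, (g ((q : ℂ) ^ j * s) ^ (q ^ (r - j - 1))) ^ q
        = g ((q : ℂ) ^ j * s) ^ (q ^ (r + 1 - j - 1)) := by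
      intro j hj
      rw [Finset.mem_range] at hj
      rw [← pow_mul, ← pow_succ]
      congr 2
      omega
    rw [Finset.prod_congr rfl h3]
    have h4 : r + 1 - r - 1 = 0 := by omega
    rw [h4, pow_zero, pow_one, pow_succ' (q : ℂ) r, mul_assoc (q : ℂ)]
    ring

lemma cpo_re (q : ℕ) (r : ℕ) (s : ℂ) : ((q : ℂ) ^ r * s).re = (q : ℝ) ^ r * s.re := by
  have : ((q : ℂ) ^ r) = (((q : ℝ) ^ r : ℝ) : ℂ) := by push_cast; rfl
  rw [this, Complex.re_ofReal_mul]

theorem continuation_pole_orders (q : ℕ) (hq : 2 ≤ q) (f g : ℂ → ℂ)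
    (hf_holo : DifferentiableOn ℂ f {s : ℂ | 1 < s.re})
    (hf_ne : ∀ s : ℂ, 1 < s.re → f s ≠ 0)
    (hg : MeromorphicOn g Set.univ)
    (hfg : ∀ s : ℂ, 1 < s.re → f s ^ q = f ((q : ℂ) * s) * g s)
    (hg_holo : DifferentiableOn ℂ g {s : ℂ | 1 < s.re})
    (hg_ne : ∀ s : ℂ, 1 < s.re → g s ≠ 0)
    (hg_pole : ∃ c : ℂ, c ≠ 0 ∧
      Tendsto (fun s : ℂ => (s - 1) ^ (q - 1) * g s) (𝓝[≠] 1) (𝓝 c))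
    (hg_reg : ∀ l : ℕ, 1 ≤ l →
      AnalyticAt ℂ g ((q : ℂ) ^ (-(l : ℤ))) ∧ g ((q : ℂ) ^ (-(l : ℤ))) ≠ 0)
    (r : ℕ) (hr : 1 ≤ r)
    (F : ℂ → ℂ) (hF : MeromorphicOn F {s : ℂ | 1 / (q : ℝ) ^ r < s.re})
    (hFf : ∀ s : ℂ, 1 < s.re → F s = f s ^ (q ^ r)) :
    ∀ i : ℕ, i ≤ r - 1 → ∃ c : ℂ, c ≠ 0 ∧
      Tendsto (fun s : ℂ => (s - (q : ℂ) ^ (-(i : ℤ))) ^ ((q - 1) * q ^ (r - i - 1)) * F s)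
        (𝓝[≠] ((q : ℂ) ^ (-(i : ℤ)))) (𝓝 c) := by
  intro i hi
  have hqR : (1 : ℝ) < q := by exact_mod_cast (by omega : 1 < q)
  have hqC : (q : ℂ) ≠ 0 := by exact_mod_cast (by omega : q ≠ 0)
  have hopen1 : IsOpen {s : ℂ | 1 < s.re} := isOpen_lt continuous_const Complex.continuous_re
  set U : Set ℂ := {s : ℂ | 1 / (q : ℝ) ^ r < s.re} with hU
  set a : ℂ := (q : ℂ) ^ (-(i : ℤ)) with ha
  have haq : (q : ℂ) ^ i * a = 1 := by
    rw [ha, zpow_neg, zpow_natCast]; exact mul_inv_cancel₀ (pow_ne_zero _ hqC)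
  set P : ℂ → ℂ := fun s => ∏ j ∈ (Finset.range r).erase i,
    g ((q : ℂ) ^ j * s) ^ (q ^ (r - j - 1)) with hP
  set G : ℂ → ℂ := fun s => f ((q : ℂ) ^ r * s) *
      ∏ j ∈ Finset.range r, g ((q : ℂ) ^ j * s) ^ (q ^ (r - j - 1)) with hGdef
  have hfan : ∀ s : ℂ, 1 < s.re → AnalyticAt ℂ f s := fun s hs =>
    hf_holo.analyticAt (hopen1.mem_nhds hs)
  have hgan : ∀ s : ℂ, 1 < s.re → AnalyticAt ℂ g s := fun s hs =>
    hg_holo.analyticAt (hopen1.mem_nhds hs)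
  have hlin : ∀ (j : ℕ) (s : ℂ), AnalyticAt ℂ (fun s : ℂ => (q : ℂ) ^ j * s) s := by
    intro j s; fun_prop
  have hlin' : ∀ (j : ℕ) (s : ℂ), ¬ ∀ᶠ z in 𝓝 s, (q : ℂ) ^ j * z = (q : ℂ) ^ j * s := by
    intro j s h
    have h2 : ∀ᶠ z in 𝓝[≠] s, (q : ℂ) ^ j * z = (q : ℂ) ^ j * s := h.filter_mono nhdsWithin_le_nhds
    obtain ⟨z, hz, hz'⟩ := (h2.and self_mem_nhdsWithin).exists
    exact hz' (mul_left_cancel₀ (pow_ne_zero _ hqC) hz)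
  have hGmer : MeromorphicOn G U := by
    intro s hs
    have h1 : 1 < ((q : ℂ) ^ r * s).re := by
      rw [cpo_re]
      have hp : (0 : ℝ) < (q : ℝ) ^ r := by positivity
      have hs' : 1 / (q : ℝ) ^ r < s.re := hs
      rw [div_lt_iff₀ hp] at hs'
      linarith
    have hfm : MeromorphicAt (fun s => f ((q : ℂ) ^ r * s)) s :=
      (AnalyticAt.comp' (hfan _ h1) (hlin r s)).meromorphicAt
    refine hfm.mul (MeromorphicAt.fun_prod fun j _ => ?_)
    refine MeromorphicAt.fun_pow ?_ _
    exact (hg _ (Set.mem_univ _)).comp_analyticAt (hlin j s)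
  have hUpre : IsPreconnected U := (convex_halfSpace_re_gt _).isPreconnected
  have haU : a ∈ U := by
    have : a = (((q : ℝ) ^ i)⁻¹ : ℝ) := by rw [ha, zpow_neg, zpow_natCast]; push_cast; rfl
    change 1 / (q : ℝ) ^ r < a.re
    rw [this, Complex.ofReal_re, one_div]
    exact inv_strictAnti₀ (by positivity) (pow_lt_pow_right₀ hqR (by omega))
  have h2U : (2 : ℂ) ∈ U := by
    change 1 / (q : ℝ) ^ r < (2 : ℂ).re
    have : (1 : ℝ) ≤ (q : ℝ) ^ r := one_le_pow₀ hqR.le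
    have h2 : 1 / (q : ℝ) ^ r ≤ 1 := by rw [div_le_one (by positivity)]; exact this
    norm_num at h2 ⊢
    linarith
  have hFG : F =ᶠ[𝓝[≠] a] G := by
    have hD : MeromorphicOn (F - G) U := hF.sub hGmer
    have hz : meromorphicOrderAt (F - G) 2 = ⊤ := by
      rw [meromorphicOrderAt_eq_top_iff]
      have : ∀ᶠ z in 𝓝 (2 : ℂ), z ∈ {s : ℂ | 1 < s.re} := hopen1.mem_nhds (by norm_num)
      filter_upwards [this.filter_mono nhdsWithin_le_nhds] with z hz
      rw [Pi.sub_apply, hFf z hz, cpo_identity q hq f g hfg r z hz, sub_self]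
    have hz2 : meromorphicOrderAt (F - G) a = ⊤ := by
      by_contra h
      exact hD.meromorphicOrderAt_ne_top_of_isPreconnected hUpre haU h2U h hz
    rw [meromorphicOrderAt_eq_top_iff] at hz2
    filter_upwards [hz2] with z hz
    exact sub_eq_zero.mp hz
  -- values at a
  have hval_gt : ∀ j : ℕ, i < j → 1 < ((q : ℂ) ^ j * a).re := by
    intro j hj
    have : (q : ℂ) ^ j * a = (q : ℂ) ^ (j - i) * 1 := by
      rw [← haq, ← mul_assoc, ← pow_add]; congr 2; omega
    rw [this, cpo_re, Complex.one_re, mul_one]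
    exact one_lt_pow₀ hqR (by omega)
  have hval : ∀ j ∈ (Finset.range r).erase i,
      AnalyticAt ℂ g ((q : ℂ) ^ j * a) ∧ g ((q : ℂ) ^ j * a) ≠ 0 := by
    intro j hj
    have hji := Finset.ne_of_mem_erase hj
    rcases lt_or_gt_of_ne hji with h | h
    · have : (q : ℂ) ^ j * a = (q : ℂ) ^ (-((i - j : ℕ) : ℤ)) := by
        rw [ha, ← zpow_natCast, ← zpow_add₀ hqC]; congr 1; omega
      rw [this]
      exact hg_reg _ (by omega)
    · exact ⟨hgan _ (hval_gt j h), hg_ne _ (hval_gt j h)⟩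
  have hPt : Tendsto P (𝓝[≠] a) (𝓝 (P a)) := by
    refine Tendsto.mono_left ?_ nhdsWithin_le_nhds
    refine tendsto_finsetProd _ fun j hj => ?_
    have : AnalyticAt ℂ (fun s => g ((q : ℂ) ^ j * s)) a :=
      AnalyticAt.comp' (hval j hj).1 (hlin j a)
    exact (this.continuousAt.tendsto).pow _
  have hPa : P a ≠ 0 := Finset.prod_ne_zero_iff.mpr fun j hj => pow_ne_zero _ (hval j hj).2
  have hra : 1 < ((q : ℂ) ^ r * a).re := hval_gt r (by omega)
  have hft : Tendsto (fun s => f ((q : ℂ) ^ r * s)) (𝓝[≠] a) (𝓝 (f ((q : ℂ) ^ r * a))) := by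
    refine Tendsto.mono_left ?_ nhdsWithin_le_nhds
    exact (AnalyticAt.comp' (hfan _ hra) (hlin r a)).continuousAt.tendsto
  obtain ⟨c, hc, hct⟩ := hg_pole
  have hmap : Tendsto (fun s : ℂ => (q : ℂ) ^ i * s) (𝓝[≠] a) (𝓝[≠] 1) := by
    refine tendsto_nhdsWithin_iff.mpr ⟨?_, ?_⟩
    · have := (hlin i a).continuousAt.tendsto
      rw [haq] at this
      exact this.mono_left nhdsWithin_le_nhds
    · filter_upwards [self_mem_nhdsWithin] with s hs h
      have h' : (q : ℂ) ^ i * s = 1 := h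
      rw [← haq] at h'
      exact hs (mul_left_cancel₀ (pow_ne_zero _ hqC) h')
  have hgt := ((hct.comp hmap).const_mul (a ^ (q - 1))).pow (q ^ (r - i - 1))
  have ha0 : a ≠ 0 := fun h => by simp [h] at haq
  refine ⟨(a ^ (q - 1) * c) ^ (q ^ (r - i - 1)) * (f ((q : ℂ) ^ r * a) * P a),
    mul_ne_zero (pow_ne_zero _ (mul_ne_zero (pow_ne_zero _ ha0) hc))
      (mul_ne_zero (hf_ne _ hra) hPa), ?_⟩
  refine (hgt.mul (hft.mul hPt)).congr' ?_
  filter_upwards [hFG] with s hs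
  have hprod : ∏ j ∈ Finset.range r, g ((q : ℂ) ^ j * s) ^ (q ^ (r - j - 1))
      = g ((q : ℂ) ^ i * s) ^ (q ^ (r - i - 1)) * P s :=
    (Finset.mul_prod_erase (Finset.range r) (fun j => g ((q : ℂ) ^ j * s) ^ (q ^ (r - j - 1)))
      (Finset.mem_range.mpr (by omega))).symm
  have hsa : s - a = a * ((q : ℂ) ^ i * s - 1) := by
    linear_combination (-s) * haq
  rw [hs, hGdef]
  simp only [Function.comp]
  rw [hprod, hsa, pow_mul, mul_pow a]
  ring
end

section
/- Let q₁ and q₂ be distinct primes and G a cyclic group of order q₁q₂, written as G ≅ H₁ × H₂ with H₁, H₂ the subgroups of orders q₁ and q₂, and let π₁ : G → H₁ and π₂ : G → H₂ be the projections. Then for every s with Re s > 1, ζ_{P_{q₁q₂}}(q₁q₂ s) · ζ_{P_{q₁q₂}}(s)^{q₁q₂} / ( ζ_{P_{q₁q₂}}(q₁ s)^{q₂} · ζ_{P_{q₁q₂}}(q₂ s)^{q₁} ) = Z^{(G)}(s) · ζ_P(s)^{q₁q₂} / ( Z^{(H₁)}(s)^{q₂} · Z^{(H₂)}(s)^{q₁}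 ); in particular all the infinite products involved converge and are nonzero. -/
open Finset in
theorem zaux_euler {ι : Type*} (a : ι → ℂ) (ha : Summable fun i => ‖a i‖) (h1 : ∀ i, ‖a i‖ < 1) :
    Multipliable (fun i => (1 - a i)⁻¹) ∧ ∏' i, (1 - a i)⁻¹ ≠ 0 := by
  have hs : Summable fun i => ‖-a i‖ := by simpa using ha
  have hm := multipliable_one_add_of_summable hs
  have hne : ∏' i, (1 + -a i) ≠ 0 := by
    refine tprod_one_add_ne_zero_of_summable (f := fun i => -a i) (fun i h => ?_) hs
    have h2 : a i = 1 := by linear_combination -h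
    have := h1 i
    rw [h2] at this
    simp at this
  have hp := hm.hasProd.inv₀ hne
  simp only [← sub_eq_add_neg] at hp hne
  refine ⟨hp.multipliable, ?_⟩
  rw [hp.tprod_eq]
  exact inv_ne_zero hne

theorem zaux_finite (H : Type*) [CommGroup H] [Finite H] : Finite (H →* ℂˣ) := by
  have : NeZero (Monoid.exponent H) := ⟨Monoid.exponent_ne_zero_of_finite⟩
  have h := CommGroup.card_monoidHom_of_hasEnoughRootsOfUnity H ℂ
  exact Nat.finite_of_card_ne_zero (by rw [h]; exact Nat.card_pos.ne')

theorem zaux_card (H : Type*) [CommGroup H] [Finite H] : Nat.card (H →* ℂˣ) = Nat.card H := by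
  have : NeZero (Monoid.exponent H) := ⟨Monoid.exponent_ne_zero_of_finite⟩
  exact CommGroup.card_monoidHom_of_hasEnoughRootsOfUnity H ℂ

theorem zaux_gen {H : Type*} [CommGroup H] [Fintype H] {q : ℕ} (hq : q.Prime)
    (hc : Fintype.card H = q) [Fintype (H →* ℂˣ)] (h : H) (hh : h ≠ 1) (x : ℂ) :
    ∏ ρ : H →* ℂˣ, (1 - (ρ h : ℂ) * x) = 1 - x ^ q := by
  classical
  haveI := Fact.mk hq
  have hprim := Complex.isPrimitiveRoot_exp q hq.ne_zero
  have key := hprim.pow_sub_pow_eq_prod_sub_mul 1 x hq.pos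
  rw [one_pow] at key
  rw [key]
  have hinj : Function.Injective (fun ρ : H →* ℂˣ => ((ρ h : ℂˣ) : ℂ)) := by
    intro ρ σ hρ
    have hρ' : ρ h = σ h := Units.ext hρ
    ext g
    obtain ⟨k, rfl⟩ := Subgroup.mem_zpowers_iff.mp
      (mem_zpowers_of_prime_card (p := q) (by rw [Nat.card_eq_fintype_card, hc]) hh (g' := g))
    rw [map_zpow, map_zpow, hρ']
  have himg : Finset.univ.image (fun ρ : H →* ℂˣ => ((ρ h : ℂˣ) : ℂ))
      = Polynomial.nthRootsFinset q (1 : ℂ) := by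
    apply Finset.eq_of_subset_of_card_le
    · intro z hz
      obtain ⟨ρ, -, rfl⟩ := Finset.mem_image.mp hz
      rw [Polynomial.mem_nthRootsFinset hq.pos]
      have : ρ h ^ q = 1 := by rw [← map_pow, ← hc, pow_card_eq_one, map_one]
      rw [← Units.val_pow_eq_pow_val, this, Units.val_one]
    · rw [Finset.card_image_of_injective _ hinj, hprim.card_nthRootsFinset, Finset.card_univ,
        ← Nat.card_eq_fintype_card, zaux_card, Nat.card_eq_fintype_card, hc]
  rw [← himg, Finset.prod_image (fun a _ b _ hab => hinj hab)]

theorem zaux_one {H : Type*} [CommGroup H] [Fintype H] {q : ℕ}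
    (hc : Fintype.card H = q) [Fintype (H →* ℂˣ)] (y : ℂ) :
    ∏ _ρ : H →* ℂˣ, y = y ^ q := by
  rw [Finset.prod_const, Finset.card_univ,
        ← Nat.card_eq_fintype_card, zaux_card, Nat.card_eq_fintype_card, hc]

theorem zaux_prod {H₁ H₂ : Type*} [CommGroup H₁] [CommGroup H₂]
    [Fintype (H₁ →* ℂˣ)] [Fintype (H₂ →* ℂˣ)] [Fintype (H₁ × H₂ →* ℂˣ)] (g : H₁ × H₂) (x : ℂ) :
    ∏ ρ : H₁ × H₂ →* ℂˣ, (1 - (ρ g : ℂ) * x)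
      = ∏ ρ₁ : H₁ →* ℂˣ, ∏ ρ₂ : H₂ →* ℂˣ, (1 - (ρ₂ g.2 : ℂ) * ((ρ₁ g.1 : ℂ) * x)) := by
  rw [← Fintype.prod_prod_type'
    (f := fun (ρ₁ : H₁ →* ℂˣ) (ρ₂ : H₂ →* ℂˣ) => (1 - (ρ₂ g.2 : ℂ) * ((ρ₁ g.1 : ℂ) * x)))]
  symm
  refine Fintype.prod_bijective (fun r : (H₁ →* ℂˣ) × (H₂ →* ℂˣ) => r.1.coprod r.2) ⟨?_, ?_⟩ _ _ ?_
  · rintro ⟨a, b⟩ ⟨c, d⟩ h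
    have h1 := congrArg (fun f => f.comp (MonoidHom.inl H₁ H₂)) h
    have h2 := congrArg (fun f => f.comp (MonoidHom.inr H₁ H₂)) h
    simp only [MonoidHom.coprod_comp_inl, MonoidHom.coprod_comp_inr] at h1 h2
    rw [h1, h2]
  · intro f
    exact ⟨(f.comp (MonoidHom.inl H₁ H₂), f.comp (MonoidHom.inr H₁ H₂)), MonoidHom.coprod_unique f⟩
  · rintro ⟨a, b⟩
    simp only [MonoidHom.coprod_apply, Units.val_mul]
    ring

theorem zaux_order {q₁ q₂ : ℕ} (hq₁ : q₁.Prime) (hq₂ : q₂.Prime) (hq : q₁ ≠ q₂)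
    {H₁ H₂ : Type*} [CommGroup H₁] [Fintype H₁] [CommGroup H₂] [Fintype H₂]
    (hcard₁ : Fintype.card H₁ = q₁) (hcard₂ : Fintype.card H₂ = q₂) (g : H₁ × H₂) :
    orderOf g = q₁ * q₂ ↔ g.1 ≠ 1 ∧ g.2 ≠ 1 := by
  have d1 : orderOf g.1 ∣ q₁ := hcard₁ ▸ orderOf_dvd_card
  have d2 : orderOf g.2 ∣ q₂ := hcard₂ ▸ orderOf_dvd_card
  have l1 := hq₁.one_lt
  have l2 := hq₂.one_lt
  rw [Prod.orderOf, ne_eq, ne_eq, ← orderOf_eq_one_iff (x := g.1), ← orderOf_eq_one_iff (x := g.2)]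
  have hco : Nat.Coprime q₁ q₂ := (Nat.coprime_primes hq₁ hq₂).mpr hq
  rcases (Nat.dvd_prime hq₁).mp d1 with h1 | h1 <;> rcases (Nat.dvd_prime hq₂).mp d2 with h2 | h2 <;>
    rw [h1, h2]
  · rw [Nat.lcm_self]
    exact ⟨fun h => by nlinarith, fun h => absurd rfl h.1⟩
  · rw [Nat.lcm_one_left]
    exact ⟨fun h => by nlinarith, fun h => absurd rfl h.1⟩
  · rw [Nat.lcm_one_right]
    exact ⟨fun h => by nlinarith, fun h => absurd rfl h.2⟩
  · rw [hco.lcm_eq_mul]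
    exact ⟨fun _ => ⟨l1.ne', l2.ne'⟩, fun _ => rfl⟩

open Classical in
theorem zaux_local {q₁ q₂ : ℕ} (hq₁ : q₁.Prime) (hq₂ : q₂.Prime) (hq : q₁ ≠ q₂)
    {H₁ H₂ : Type*} [CommGroup H₁] [Fintype H₁] [CommGroup H₂] [Fintype H₂]
    (hcard₁ : Fintype.card H₁ = q₁) (hcard₂ : Fintype.card H₂ = q₂)
    [Fintype (H₁ →* ℂˣ)] [Fintype (H₂ →* ℂˣ)] [Fintype (H₁ × H₂ →* ℂˣ)] (g : H₁ × H₂) (x : ℂ) :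
    (if orderOf g = q₁ * q₂ then (1 - x ^ (q₁ * q₂))⁻¹ else 1)
      * (if orderOf g = q₁ * q₂ then (1 - x)⁻¹ else 1) ^ (q₁ * q₂)
      * ((∏ ρ : H₁ →* ℂˣ, (1 - (ρ g.1 : ℂ) * x)⁻¹) ^ q₂
        * (∏ ρ : H₂ →* ℂˣ, (1 - (ρ g.2 : ℂ) * x)⁻¹) ^ q₁)
    = (∏ ρ : H₁ × H₂ →* ℂˣ, (1 - (ρ g : ℂ) * x)⁻¹) * (1 - x)⁻¹ ^ (q₁ * q₂)
      * ((if orderOf g = q₁ * q₂ then (1 - x ^ q₁)⁻¹ else 1) ^ q₂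
        * (if orderOf g = q₁ * q₂ then (1 - x ^ q₂)⁻¹ else 1) ^ q₁) := by
  simp only [zaux_order hq₁ hq₂ hq hcard₁ hcard₂, Finset.prod_inv_distrib, zaux_prod]
  by_cases h1 : g.1 = 1 <;> by_cases h2 : g.2 = 1
  · simp only [h1, h2, map_one, Units.val_one, one_mul, zaux_one hcard₁, zaux_one hcard₂]
    simp only [ne_eq, not_true_eq_false, false_and, if_false]
    ring
  · simp only [h1, map_one, Units.val_one, one_mul, zaux_one hcard₁, zaux_gen hq₂ hcard₂ _ h2]
    simp only [ne_eq, not_true_eq_false, false_and, if_false]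
    ring
  · simp only [h2, map_one, Units.val_one, one_mul, zaux_one hcard₂, zaux_gen hq₁ hcard₁ _ h1,
      Finset.prod_pow]
    simp only [ne_eq, not_true_eq_false, and_false, if_false]
    ring
  · have h3 : g.1 ^ q₂ ≠ 1 := by
      intro h
      have d1 : orderOf g.1 ∣ q₁ := hcard₁ ▸ orderOf_dvd_card
      have d2 := orderOf_dvd_of_pow_eq_one h
      have := Nat.dvd_gcd d1 d2
      rw [(Nat.coprime_primes hq₁ hq₂).mpr hq] at this
      exact h1 (orderOf_eq_one_iff.mp (Nat.dvd_one.mp this))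
    have h4 : ∏ ρ : H₁ →* ℂˣ, (1 - ((ρ g.1 : ℂ) * x) ^ q₂) = 1 - x ^ (q₁ * q₂) := by
      rw [mul_comm q₁, pow_mul, ← zaux_gen hq₁ hcard₁ _ h3]
      refine Finset.prod_congr rfl fun ρ _ => ?_
      rw [map_pow, Units.val_pow_eq_pow_val, mul_pow]
    simp only [zaux_gen hq₁ hcard₁ _ h1, zaux_gen hq₂ hcard₂ _ h2, h4, ne_eq, h1, h2,
      not_false_eq_true, and_self, if_true]


/-- Let `q₁ ≠ q₂` be primes and `G = H₁ × H₂` a cyclic group of order `q₁q₂`, with `H₁, H₂`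
the subgroups of orders `q₁, q₂` and projections `π₁, π₂`.  With
`ζ_{P_{q₁q₂}}(t) = ∏_{ord(φ(p)) = q₁q₂} (1 - N(p)^(-t))⁻¹`, `ζ_P(t) = ∏_p (1 - N(p)^(-t))⁻¹`,
`Z^{(G)}(t) = ∏_{ρ ∈ Ĝ} ∏_p (1 - ρ(φ(p)) N(p)^(-t))⁻¹` and
`Z^{(Hᵢ)}(t) = ∏_{ρ ∈ Ĥᵢ} ∏_p (1 - ρ(πᵢ(φ(p))) N(p)^(-t))⁻¹`, for `Re s > 1` one has
`ζ_{P_{q₁q₂}}(q₁q₂s) ζ_{P_{q₁q₂}}(s)^{q₁q₂} / (ζ_{P_{q₁q₂}}(q₁s)^{q₂} ζ_{P_{q₁q₂}}(q₂s)^{q₁})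
  = Z^{(G)}(s) ζ_P(s)^{q₁q₂} / (Z^{(H₁)}(s)^{q₂} Z^{(H₂)}(s)^{q₁})`,
all the infinite products involved converging and being nonzero. -/
theorem zetaPq1q2_functional_equation {P : Type*} [Countable P] [Infinite P] (N : P → ℝ)
    (hN : ∀ p, 1 < N p)
    (hsum : ∀ σ : ℝ, 1 < σ → Summable fun p => (N p) ^ (-σ))
    (q₁ q₂ : ℕ) (hq₁ : q₁.Prime) (hq₂ : q₂.Prime) (hq : q₁ ≠ q₂)
    {H₁ H₂ : Type*} [CommGroup H₁] [Fintype H₁] [CommGroup H₂] [Fintype H₂]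
    (hcard₁ : Fintype.card H₁ = q₁) (hcard₂ : Fintype.card H₂ = q₂)
    (φ : P → H₁ × H₂)
    (ζpq ζP ZG ZH₁ ZH₂ : ℂ → ℂ)
    (hζpq : ∀ t : ℂ, ζpq t
      = ∏' p : {p : P // orderOf (φ p) = q₁ * q₂}, (1 - (N p.1 : ℂ) ^ (-t))⁻¹)
    (hζP : ∀ t : ℂ, ζP t = ∏' p : P, (1 - (N p : ℂ) ^ (-t))⁻¹)
    (hZG : ∀ t : ℂ, ZG t
      = ∏' ρ : H₁ × H₂ →* ℂˣ, ∏' p : P, (1 - (ρ (φ p) : ℂ) * (N p : ℂ) ^ (-t))⁻¹)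
    (hZH₁ : ∀ t : ℂ, ZH₁ t
      = ∏' ρ : H₁ →* ℂˣ, ∏' p : P, (1 - (ρ (φ p).1 : ℂ) * (N p : ℂ) ^ (-t))⁻¹)
    (hZH₂ : ∀ t : ℂ, ZH₂ t
      = ∏' ρ : H₂ →* ℂˣ, ∏' p : P, (1 - (ρ (φ p).2 : ℂ) * (N p : ℂ) ^ (-t))⁻¹)
    (s : ℂ) (hs : 1 < s.re) :
    (∀ t ∈ ({(q₁ : ℂ) * q₂ * s, s, (q₁ : ℂ) * s, (q₂ : ℂ) * s} : Set ℂ),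
      Multipliable (fun p : {p : P // orderOf (φ p) = q₁ * q₂} =>
        (1 - (N p.1 : ℂ) ^ (-t))⁻¹) ∧ ζpq t ≠ 0) ∧
    (Multipliable (fun p : P => (1 - (N p : ℂ) ^ (-s))⁻¹) ∧ ζP s ≠ 0) ∧
    (∀ ρ : H₁ × H₂ →* ℂˣ,
      Multipliable (fun p : P => (1 - (ρ (φ p) : ℂ) * (N p : ℂ) ^ (-s))⁻¹)) ∧
    (∀ ρ : H₁ →* ℂˣ,
      Multipliable (fun p : P => (1 - (ρ (φ p).1 : ℂ) * (N p : ℂ) ^ (-s))⁻¹)) ∧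
    (∀ ρ : H₂ →* ℂˣ,
      Multipliable (fun p : P => (1 - (ρ (φ p).2 : ℂ) * (N p : ℂ) ^ (-s))⁻¹)) ∧
    ZG s ≠ 0 ∧ ZH₁ s ≠ 0 ∧ ZH₂ s ≠ 0 ∧
    ζpq ((q₁ : ℂ) * q₂ * s) * ζpq s ^ (q₁ * q₂)
        / (ζpq ((q₁ : ℂ) * s) ^ q₂ * ζpq ((q₂ : ℂ) * s) ^ q₁)
      = ZG s * ζP s ^ (q₁ * q₂) / (ZH₁ s ^ q₂ * ZH₂ s ^ q₁) := by
  classical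
  haveI := zaux_finite H₁
  haveI := zaux_finite H₂
  haveI := zaux_finite (H₁ × H₂)
  letI := Fintype.ofFinite (H₁ →* ℂˣ)
  letI := Fintype.ofFinite (H₂ →* ℂˣ)
  letI := Fintype.ofFinite (H₁ × H₂ →* ℂˣ)
  have hN0 : ∀ p, 0 < N p := fun p => one_pos.trans (hN p)
  have hnorm : ∀ (t : ℂ) (p : P), ‖(N p : ℂ) ^ (-t)‖ = N p ^ (-t.re) := fun t p => by
    rw [Complex.norm_cpow_eq_rpow_re_of_pos (hN0 p), Complex.neg_re]
  have hlt : ∀ t : ℂ, 1 < t.re → ∀ p, ‖(N p : ℂ) ^ (-t)‖ < 1 := fun t ht p => by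
    rw [hnorm]
    exact Real.rpow_lt_one_of_one_lt_of_neg (hN p) (by linarith)
  have hsm : ∀ t : ℂ, 1 < t.re → Summable fun p => ‖(N p : ℂ) ^ (-t)‖ := fun t ht => by
    simp only [hnorm]
    exact hsum _ ht
  -- unit-twisted products
  have htw : ∀ u : P → ℂ, (∀ p, ‖u p‖ = 1) →
      Multipliable (fun p : P => (1 - u p * (N p : ℂ) ^ (-s))⁻¹)
        ∧ ∏' p, (1 - u p * (N p : ℂ) ^ (-s))⁻¹ ≠ 0 := fun u hu => by
    apply zaux_euler
    · simpa only [norm_mul, hu, one_mul] using hsm s hs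
    · simpa only [norm_mul, hu, one_mul] using hlt s hs
  have hsub : ∀ t : ℂ, 1 < t.re →
      Multipliable (fun p : {p : P // orderOf (φ p) = q₁ * q₂} => (1 - (N p.1 : ℂ) ^ (-t))⁻¹)
        ∧ ζpq t ≠ 0 := fun t ht => by
    rw [hζpq]
    apply zaux_euler
    · exact (hsm t ht).comp_injective Subtype.val_injective
    · exact fun p => hlt t ht p.1
  have hP : Multipliable (fun p : P => (1 - (N p : ℂ) ^ (-s))⁻¹) ∧ ζP s ≠ 0 := by
    rw [hζP]
    exact zaux_euler _ (hsm s hs) (hlt s hs)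
  have hu1 : ∀ (ρ : H₁ →* ℂˣ) (h : H₁), ‖(ρ h : ℂ)‖ = 1 := fun ρ h => by
    refine Complex.norm_eq_one_of_pow_eq_one (n := Fintype.card H₁) ?_ Fintype.card_ne_zero
    rw [← Units.val_pow_eq_pow_val, ← map_pow, pow_card_eq_one, map_one, Units.val_one]
  have hu2 : ∀ (ρ : H₂ →* ℂˣ) (h : H₂), ‖(ρ h : ℂ)‖ = 1 := fun ρ h => by
    refine Complex.norm_eq_one_of_pow_eq_one (n := Fintype.card H₂) ?_ Fintype.card_ne_zero
    rw [← Units.val_pow_eq_pow_val, ← map_pow, pow_card_eq_one, map_one, Units.val_one]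
  have hu : ∀ (ρ : H₁ × H₂ →* ℂˣ) (h : H₁ × H₂), ‖(ρ h : ℂ)‖ = 1 := fun ρ h => by
    refine Complex.norm_eq_one_of_pow_eq_one (n := Fintype.card (H₁ × H₂)) ?_ Fintype.card_ne_zero
    rw [← Units.val_pow_eq_pow_val, ← map_pow, pow_card_eq_one, map_one, Units.val_one]
  have hG := fun ρ : H₁ × H₂ →* ℂˣ => htw (fun p => (ρ (φ p) : ℂ)) (fun p => hu ρ _)
  have h1 := fun ρ : H₁ →* ℂˣ => htw (fun p => (ρ (φ p).1 : ℂ)) (fun p => hu1 ρ _)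
  have h2 := fun ρ : H₂ →* ℂˣ => htw (fun p => (ρ (φ p).2 : ℂ)) (fun p => hu2 ρ _)
  have hGne : ZG s ≠ 0 := by
    rw [hZG, tprod_fintype]
    exact Finset.prod_ne_zero_iff.mpr fun ρ _ => (hG ρ).2
  have h1ne : ZH₁ s ≠ 0 := by
    rw [hZH₁, tprod_fintype]
    exact Finset.prod_ne_zero_iff.mpr fun ρ _ => (h1 ρ).2
  have h2ne : ZH₂ s ≠ 0 := by
    rw [hZH₂, tprod_fintype]
    exact Finset.prod_ne_zero_iff.mpr fun ρ _ => (h2 ρ).2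
  have hGp : HasProd (fun p => ∏ ρ : H₁ × H₂ →* ℂˣ, (1 - (ρ (φ p) : ℂ) * (N p : ℂ) ^ (-s))⁻¹)
      (ZG s) := by
    rw [hZG, tprod_fintype]
    exact hasProd_prod fun ρ _ => (hG ρ).1.hasProd
  have h1p : HasProd (fun p => ∏ ρ : H₁ →* ℂˣ, (1 - (ρ (φ p).1 : ℂ) * (N p : ℂ) ^ (-s))⁻¹)
      (ZH₁ s) := by
    rw [hZH₁, tprod_fintype]
    exact hasProd_prod fun ρ _ => (h1 ρ).1.hasProd
  have h2p : HasProd (fun p => ∏ ρ : H₂ →* ℂˣ, (1 - (ρ (φ p).2 : ℂ) * (N p : ℂ) ^ (-s))⁻¹)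
      (ZH₂ s) := by
    rw [hZH₂, tprod_fintype]
    exact hasProd_prod fun ρ _ => (h2 ρ).1.hasProd
  have hPp : HasProd (fun p => (1 - (N p : ℂ) ^ (-s))⁻¹) (ζP s) := by
    rw [hζP]
    exact hP.1.hasProd
  have hsubp : ∀ t : ℂ, 1 < t.re → HasProd
      (fun p => if orderOf (φ p) = q₁ * q₂ then (1 - (N p : ℂ) ^ (-t))⁻¹ else 1) (ζpq t) :=
    fun t ht => by
    have h := (hsub t ht).1.hasProd
    rw [← hζpq] at h
    have h' := (hasProd_subtype_iff_mulIndicator (s := {p : P | orderOf (φ p) = q₁ * q₂})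
      (f := fun p => (1 - (N p : ℂ) ^ (-t))⁻¹)).mp h
    refine h'.congr_fun ?_
    intro p
    simp [Set.mulIndicator_apply]
  have hre : ∀ n : ℕ, n ≠ 0 → 1 < ((n : ℂ) * s).re := fun n hn => by
    have : (1 : ℝ) ≤ n := by exact_mod_cast Nat.one_le_iff_ne_zero.mpr hn
    rw [← Complex.ofReal_natCast, Complex.re_ofReal_mul]
    nlinarith
  have hpow : ∀ (n : ℕ) (p : P), (N p : ℂ) ^ (-((n : ℂ) * s)) = ((N p : ℂ) ^ (-s)) ^ n :=
    fun n p => by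
    rw [← mul_neg, Complex.cpow_nat_mul]
  have r12 := hre (q₁ * q₂) (mul_ne_zero hq₁.ne_zero hq₂.ne_zero)
  have r1 := hre q₁ hq₁.ne_zero
  have r2 := hre q₂ hq₂.ne_zero
  have hs12 := hsubp _ r12
  have hs1 := hsubp _ r1
  have hs2 := hsubp _ r2
  have hs0 := hsubp _ hs
  simp only [hpow] at hs12 hs1 hs2
  have hL := (hs12.mul (hs0.pow (q₁ * q₂))).mul ((h1p.pow q₂).mul (h2p.pow q₁))
  have hR := (hGp.mul (hPp.pow (q₁ * q₂))).mul ((hs1.pow q₂).mul (hs2.pow q₁))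
  simp only [zaux_local hq₁ hq₂ hq hcard₁ hcard₂] at hL
  have hfin := hL.unique hR
  rw [Nat.cast_mul] at r12 hfin
  refine ⟨?_, hP, fun ρ => (hG ρ).1, fun ρ => (h1 ρ).1, fun ρ => (h2 ρ).1, hGne, h1ne, h2ne, ?_⟩
  · rintro t (rfl | rfl | rfl | rfl)
    · exact hsub _ r12
    · exact hsub _ hs
    · exact hsub _ r1
    · exact hsub _ r2
  · rw [div_eq_div_iff]
    · exact hfin
    · exact mul_ne_zero (pow_ne_zero _ (hsub _ r1).2) (pow_ne_zero _ (hsub _ r2).2)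
    · exact mul_ne_zero (pow_ne_zero _ h1ne) (pow_ne_zero _ h2ne)
end
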